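/- Traces uniquely identify places in a derivation: within a single derivation tree of the trace-instrumented semantics, any two rule occurrences τ₁, S₁, t₁ → τ₁', r₁ and τ₂, S₂, t₂ → τ₂', r₂ with τ₁ = τ₂ are the same occurrence; consequently the environment E_τ, heap H_τ, and instrumentation components at a trace τ occurring in the derivation are well defined. -/

import Mathlib

/-!
Two facts carry the proof.

* The instrumented reduction is deterministic (`TRed.det`): the extended term selects the rule,
  an abort excludes every other rule, and allocation takes the least fresh location. Hence the
  configurations of the premises of a rule are determined by the configuration it is applied at.
* Threading traces through a derivation is a depth-first traversal that appends at least one entry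
  each time it enters a rule. So the lengths of the incoming traces already separate the
  occurrences: in the tree of `c → o` they lie in `[|c.τ|, |o.τ|)`, the root alone attains `|c.τ|`,
  and when the rule has two premises, the intervals of the two subtrees are disjoint. This is the
  invariant `Separated`, established by induction on the derivation.

Equal traces have equal lengths, so they belong to the same configuration, and determinism gives
the same outcome.
-/

set_option autoImplicit false

/-! ## Syntax of O'While

Terms are parameterized by a type `α` of annotations (e.g. `Unit` for plain
terms, or program points for annotated terms). -/

abbrev Var := String
abbrev FieldName := String
abbrev Loc := ℕ

/-- Values: primitive (boolean) constants or locations. -/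
inductive Val : Type where
  | bool : Bool → Val
  | loc : Loc → Val
deriving DecidableEq

/-- Binary operators act on primitive (boolean) values. -/
abbrev Op := Bool → Bool → Bool

/-- Expressions: constants, variables, binary operations, object creation and
field access. -/
inductive Expr (α : Type) : Type where
  | cst : α → Bool → Expr α
  | var : α → Var → Expr α
  | bin : α → Op → Expr α → Expr α → Expr α
  | obj : α → Expr α
  | fld : α → Expr α → FieldName → Expr α

/-- Statements: skip, sequence, conditional, loop, assignment, field
assignment and field deletion. -/
inductive Stat (α : Type) : Type where
  | skip : α → Stat α
  | seq : α → Stat α → Stat α → Stat α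
  | ite : α → Expr α → Stat α → Stat α → Stat α
  | whileDo : α → Expr α → Stat α → Stat α
  | asgn : α → Var → Expr α → Stat α
  | fldAsgn : α → Expr α → FieldName → Expr α → Stat α
  | del : α → Expr α → FieldName → Stat α

/-! ## Semantic domains -/

/-- Objects are (partial) maps from fields to values. -/
abbrev ObjV : Type := FieldName → Option Val
/-- Environments map variables to values. -/
abbrev Env : Type := Var → Option Val
/-- Heaps map locations to objects. -/
abbrev Heap : Type := Loc → Option ObjV

/-- Update of a partial map. -/
def fupd {κ β : Type} [DecidableEq κ] (m : κ → Option β) (k : κ) (b : Option β) :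
    κ → Option β := fun k' => if k' = k then b else m k'

/-- Results: a state `S`, a pair of a state and a value `S, v`, or an error
`S, err`. -/
inductive Res : Type where
  | st : Env → Heap → Res
  | val : Env → Heap → Val → Res
  | err : Env → Heap → Res

/-- The state component `st(r)` of a result. -/
def Res.stateOf : Res → Env × Heap
  | .st E H => (E, H)
  | .val E H _ => (E, H)
  | .err E H => (E, H)

/-- The heap component of a result. -/
def Res.heapOf (r : Res) : Heap := r.stateOf.2

/-- Lookup of the field of an object in a heap: `H[l][f]`. -/
def hget (H : Heap) (l : Loc) (f : FieldName) : Option Val := (H l).bind fun o => o f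

/-! ## Extended terms (pretty-big-step) -/

/-- Extended terms: plain statements and expressions, plus the intermediate
syntactic constructs of the pretty-big-step semantics, storing the results of
already-evaluated subterms. -/
inductive ExtTerm (α : Type) : Type where
  | stat : Stat α → ExtTerm α
  | expr : Expr α → ExtTerm α
  | seq1 : Res → Stat α → ExtTerm α
  | if1 : Res → Stat α → Stat α → ExtTerm α
  | while1 : Res → α → Expr α → Stat α → ExtTerm α
  | while2 : Res → α → Expr α → Stat α → ExtTerm α
  | asgn1 : Var → Res → ExtTerm α
  | fldAsgn1 : Res → FieldName → Expr α → ExtTerm α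
  | fldAsgn2 : Loc → FieldName → Res → ExtTerm α
  | del1 : Res → FieldName → ExtTerm α
  | bin1 : Op → Res → Expr α → ExtTerm α
  | bin2 : Op → Val → Res → ExtTerm α
  | fld1 : Res → FieldName → ExtTerm α

def Res.errOf : Res → Option Res
  | .err E H => some (.err E H)
  | _ => none

/-- The abort function: it is defined (at least) on every extended term
containing a subterm equal to `S, err`, and propagates the error. -/
def abortFn {α : Type} : ExtTerm α → Option Res
  | .seq1 r _ => r.errOf
  | .if1 r _ _ => r.errOf
  | .while1 r _ _ _ => r.errOf
  | .while2 r _ _ _ => r.errOf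
  | .asgn1 _ r => r.errOf
  | .fldAsgn1 r _ _ => r.errOf
  | .fldAsgn2 _ _ r => r.errOf
  | .del1 r _ => r.errOf
  | .bin1 _ r _ => r.errOf
  | .bin2 _ _ r => r.errOf
  | .fld1 r _ => r.errOf
  | _ => none

/-! ## Traces -/

/-- Names of the rules of the pretty-big-step semantics. -/
inductive RuleName : Type where
  | skip | seq | seq1 | if_ | ifTrue | ifFalse
  | while_ | whileTrue1 | whileTrue2 | whileFalse
  | asg | asg1 | fldAsg | fldAsg1 | fldAsg2 | del | del1
  | cst | var | bin | bin1 | bin2 | obj | fld | fld1 | abort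
deriving DecidableEq

/-- Decorations of rule names in traces: `i` marks entering the rule, `o`
marks exiting it. -/
inductive Dir : Type where
  | i | o
deriving DecidableEq

/-- Partial traces: lists of decorated rule names. -/
abbrev Trace : Type := List (RuleName × Dir)

/-- Trace obtained when entering rule `n`. -/
def tin (n : RuleName) (τ : Trace) : Trace := τ ++ [(n, .i)]
/-- Trace obtained when exiting rule `n`. -/
def tout (n : RuleName) (τ : Trace) : Trace := τ ++ [(n, .o)]
/-- Trace produced by an axiom rule `n`: enter and exit. -/
def tax (n : RuleName) (τ : Trace) : Trace := τ ++ [(n, .i), (n, .o)]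

/-- A configuration of the trace-instrumented semantics: the incoming trace
together with the state and the extended term to evaluate.  (The left trace annotation of the rule
applied at this configuration is `tin n τ` where `n` is the rule's name.) -/
structure TConf (α : Type) : Type where
  τ : Trace
  E : Env
  H : Heap
  t : ExtTerm α

/-- An outcome of the trace-instrumented semantics: the final (right) trace
and the result. -/
structure TOut : Type where
  τ : Trace
  r : Res

/-! ## The trace-instrumented pretty-big-step semantics

`TRed ⟨τ, E, H, t⟩ ⟨τ', r⟩` is the reduction `τ, S, t → τ', r` of the paper (the trace `τ` is the
trace *before* entering the rule; the rule for `n` has left annotation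
`tin n τ`). -/
inductive TRed {α : Type} : TConf α → TOut → Prop where
  | skip : ∀ (τ : Trace) (E : Env) (H : Heap) (a : α),
      TRed ⟨τ, E, H, .stat (.skip a)⟩ ⟨tax .skip τ, .st E H⟩
  | seq : ∀ (τ : Trace) (E : Env) (H : Heap) (a : α)
      (s₁ s₂ : Stat α) (τ₂ : Trace) (r : Res)
      (τ₄ : Trace) (r' : Res),
      TRed ⟨tin .seq τ, E, H, .stat s₁⟩ ⟨τ₂, r⟩ →
      TRed ⟨τ₂, E, H, .seq1 r s₂⟩ ⟨τ₄, r'⟩ →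
      TRed ⟨τ, E, H, .stat (.seq a s₁ s₂)⟩ ⟨tout .seq τ₄, r'⟩
  | seq1 : ∀ (τ : Trace) (E : Env) (H : Heap)
      (E' : Env) (H' : Heap) (s : Stat α) (τ₂ : Trace) (r : Res),
      TRed ⟨tin .seq1 τ, E', H', .stat s⟩ ⟨τ₂, r⟩ →
      TRed ⟨τ, E, H, .seq1 (.st E' H') s⟩ ⟨tout .seq1 τ₂, r⟩
  | if_ : ∀ (τ : Trace) (E : Env) (H : Heap) (a : α)
      (e : Expr α) (s₁ s₂ : Stat α) (τ₂ : Trace) (r : Res)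
      (τ₄ : Trace) (r' : Res),
      TRed ⟨tin .if_ τ, E, H, .expr e⟩ ⟨τ₂, r⟩ →
      TRed ⟨τ₂, E, H, .if1 r s₁ s₂⟩ ⟨τ₄, r'⟩ →
      TRed ⟨τ, E, H, .stat (.ite a e s₁ s₂)⟩ ⟨tout .if_ τ₄, r'⟩
  | ifTrue : ∀ (τ : Trace) (E : Env) (H : Heap)
      (E' : Env) (H' : Heap) (s₁ s₂ : Stat α) (τ₂ : Trace) (r : Res),
      TRed ⟨tin .ifTrue τ, E', H', .stat s₁⟩ ⟨τ₂, r⟩ →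
      TRed ⟨τ, E, H, .if1 (.val E' H' (.bool true)) s₁ s₂⟩
        ⟨tout .ifTrue τ₂, r⟩
  | ifFalse : ∀ (τ : Trace) (E : Env) (H : Heap)
      (E' : Env) (H' : Heap) (s₁ s₂ : Stat α) (τ₂ : Trace) (r : Res),
      TRed ⟨tin .ifFalse τ, E', H', .stat s₂⟩ ⟨τ₂, r⟩ →
      TRed ⟨τ, E, H, .if1 (.val E' H' (.bool false)) s₁ s₂⟩
        ⟨tout .ifFalse τ₂, r⟩
  | while_ : ∀ (τ : Trace) (E : Env) (H : Heap) (a : α)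
      (e : Expr α) (s : Stat α) (τ₂ : Trace) (r : Res)
      (τ₄ : Trace) (r' : Res),
      TRed ⟨tin .while_ τ, E, H, .expr e⟩ ⟨τ₂, r⟩ →
      TRed ⟨τ₂, E, H, .while1 r a e s⟩ ⟨τ₄, r'⟩ →
      TRed ⟨τ, E, H, .stat (.whileDo a e s)⟩ ⟨tout .while_ τ₄, r'⟩
  | whileTrue1 : ∀ (τ : Trace) (E : Env) (H : Heap)
      (E' : Env) (H' : Heap) (a : α) (e : Expr α) (s : Stat α)
      (τ₂ : Trace) (r : Res)
      (τ₄ : Trace) (r' : Res),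
      TRed ⟨tin .whileTrue1 τ, E', H', .stat s⟩ ⟨τ₂, r⟩ →
      TRed ⟨τ₂, E', H', .while2 r a e s⟩ ⟨τ₄, r'⟩ →
      TRed ⟨τ, E, H, .while1 (.val E' H' (.bool true)) a e s⟩
        ⟨tout .whileTrue1 τ₄, r'⟩
  | whileTrue2 : ∀ (τ : Trace) (E : Env) (H : Heap)
      (E' : Env) (H' : Heap) (a : α) (e : Expr α) (s : Stat α)
      (τ₂ : Trace) (r : Res),
      TRed ⟨tin .whileTrue2 τ, E', H', .stat (.whileDo a e s)⟩ ⟨τ₂, r⟩ →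
      TRed ⟨τ, E, H, .while2 (.st E' H') a e s⟩ ⟨tout .whileTrue2 τ₂, r⟩
  | whileFalse : ∀ (τ : Trace) (E : Env) (H : Heap)
      (E' : Env) (H' : Heap) (a : α) (e : Expr α) (s : Stat α),
      TRed ⟨τ, E, H, .while1 (.val E' H' (.bool false)) a e s⟩
        ⟨tax .whileFalse τ, .st E' H'⟩
  | asg : ∀ (τ : Trace) (E : Env) (H : Heap) (a : α)
      (x : Var) (e : Expr α) (τ₂ : Trace) (r : Res)
      (τ₄ : Trace) (r' : Res),
      TRed ⟨tin .asg τ, E, H, .expr e⟩ ⟨τ₂, r⟩ →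
      TRed ⟨τ₂, E, H, .asgn1 x r⟩ ⟨τ₄, r'⟩ →
      TRed ⟨τ, E, H, .stat (.asgn a x e)⟩ ⟨tout .asg τ₄, r'⟩
  | asg1 : ∀ (τ : Trace) (E₀ : Env) (H₀ : Heap)
      (E : Env) (H : Heap) (x : Var) (v : Val),
      TRed ⟨τ, E₀, H₀, .asgn1 x (.val E H v)⟩
        ⟨tax .asg1 τ,
         .st (fupd E x (some v)) H⟩
  | fldAsg : ∀ (τ : Trace) (E : Env) (H : Heap) (a : α)
      (e₁ : Expr α) (f : FieldName) (e₂ : Expr α)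
      (τ₂ : Trace) (r : Res)
      (τ₄ : Trace) (r' : Res),
      TRed ⟨tin .fldAsg τ, E, H, .expr e₁⟩ ⟨τ₂, r⟩ →
      TRed ⟨τ₂, E, H, .fldAsgn1 r f e₂⟩ ⟨τ₄, r'⟩ →
      TRed ⟨τ, E, H, .stat (.fldAsgn a e₁ f e₂)⟩ ⟨tout .fldAsg τ₄, r'⟩
  | fldAsg1 : ∀ (τ : Trace) (E : Env) (H : Heap)
      (E' : Env) (H' : Heap) (l : Loc) (f : FieldName) (e : Expr α)
      (τ₂ : Trace) (r : Res)
      (τ₄ : Trace) (r' : Res),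
      TRed ⟨tin .fldAsg1 τ, E', H', .expr e⟩ ⟨τ₂, r⟩ →
      TRed ⟨τ₂, E', H', .fldAsgn2 l f r⟩ ⟨τ₄, r'⟩ →
      TRed ⟨τ, E, H, .fldAsgn1 (.val E' H' (.loc l)) f e⟩
        ⟨tout .fldAsg1 τ₄, r'⟩
  | fldAsg2 : ∀ (τ : Trace) (E₀ : Env) (H₀ : Heap)
      (E : Env) (H : Heap) (v : Val) (l : Loc) (f : FieldName) (o : ObjV),
      H l = some o →
      TRed ⟨τ, E₀, H₀, .fldAsgn2 l f (.val E H v)⟩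
        ⟨tax .fldAsg2 τ,
         .st E (fupd H l (some (fupd o f (some v))))⟩
  | del : ∀ (τ : Trace) (E : Env) (H : Heap) (a : α)
      (e : Expr α) (f : FieldName)
      (τ₂ : Trace) (r : Res)
      (τ₄ : Trace) (r' : Res),
      TRed ⟨tin .del τ, E, H, .expr e⟩ ⟨τ₂, r⟩ →
      TRed ⟨τ₂, E, H, .del1 r f⟩ ⟨τ₄, r'⟩ →
      TRed ⟨τ, E, H, .stat (.del a e f)⟩ ⟨tout .del τ₄, r'⟩
  | del1 : ∀ (τ : Trace) (E₀ : Env) (H₀ : Heap)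
      (E : Env) (H : Heap) (l : Loc) (f : FieldName) (o : ObjV),
      H l = some o →
      (o f).isSome →
      TRed ⟨τ, E₀, H₀, .del1 (.val E H (.loc l)) f⟩
        ⟨tax .del1 τ, .st E (fupd H l (some (fupd o f none)))⟩
  | cst : ∀ (τ : Trace) (E : Env) (H : Heap)
      (a : α) (c : Bool),
      TRed ⟨τ, E, H, .expr (.cst a c)⟩ ⟨tax .cst τ, .val E H (.bool c)⟩
  | var : ∀ (τ : Trace) (E : Env) (H : Heap)
      (a : α) (x : Var) (v : Val),
      E x = some v →
      TRed ⟨τ, E, H, .expr (.var a x)⟩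
        ⟨tax .var τ, .val E H v⟩
  | bin : ∀ (τ : Trace) (E : Env) (H : Heap)
      (a : α) (op : Op) (e₁ e₂ : Expr α)
      (τ₂ : Trace) (r : Res)
      (τ₄ : Trace) (r' : Res),
      TRed ⟨tin .bin τ, E, H, .expr e₁⟩ ⟨τ₂, r⟩ →
      TRed ⟨τ₂, E, H, .bin1 op r e₂⟩ ⟨τ₄, r'⟩ →
      TRed ⟨τ, E, H, .expr (.bin a op e₁ e₂)⟩ ⟨tout .bin τ₄, r'⟩
  | bin1 : ∀ (τ : Trace) (E : Env) (H : Heap)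
      (E' : Env) (H' : Heap) (op : Op) (v₁ : Val) (e₂ : Expr α)
      (τ₂ : Trace) (r : Res)
      (τ₄ : Trace) (r' : Res),
      TRed ⟨tin .bin1 τ, E', H', .expr e₂⟩ ⟨τ₂, r⟩ →
      TRed ⟨τ₂, E', H', .bin2 op v₁ r⟩ ⟨τ₄, r'⟩ →
      TRed ⟨τ, E, H, .bin1 op (.val E' H' v₁) e₂⟩ ⟨tout .bin1 τ₄, r'⟩
  | bin2 : ∀ (τ : Trace) (E₀ : Env) (H₀ : Heap)
      (E : Env) (H : Heap) (op : Op) (b₁ b₂ : Bool),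
      TRed ⟨τ, E₀, H₀, .bin2 op (.bool b₁) (.val E H (.bool b₂))⟩
        ⟨tax .bin2 τ, .val E H (.bool (op b₁ b₂))⟩
  | obj : ∀ (τ : Trace) (E : Env) (H : Heap)
      (a : α) (l : Loc),
      H l = none →
      (∀ l' : Loc, l' < l → H l' ≠ none) →
      TRed ⟨τ, E, H, .expr (.obj a)⟩
        ⟨tax .obj τ,
         .val E (fupd H l (some (fun _ => none))) (.loc l)⟩
  | fld : ∀ (τ : Trace) (E : Env) (H : Heap)
      (a : α) (e : Expr α) (f : FieldName)
      (τ₂ : Trace) (r : Res)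
      (τ₄ : Trace) (r' : Res),
      TRed ⟨tin .fld τ, E, H, .expr e⟩ ⟨τ₂, r⟩ →
      TRed ⟨τ₂, E, H, .fld1 r f⟩ ⟨τ₄, r'⟩ →
      TRed ⟨τ, E, H, .expr (.fld a e f)⟩ ⟨tout .fld τ₄, r'⟩
  | fld1 : ∀ (τ : Trace) (E₀ : Env) (H₀ : Heap)
      (E : Env) (H : Heap) (l : Loc) (f : FieldName) (o : ObjV) (v : Val),
      H l = some o →
      o f = some v →
      TRed ⟨τ, E₀, H₀, .fld1 (.val E H (.loc l)) f⟩
        ⟨tax .fld1 τ, .val E H v⟩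
  | abort : ∀ (τ : Trace) (E : Env) (H : Heap)
      (t : ExtTerm α) (r : Res),
      abortFn t = some r →
      TRed ⟨τ, E, H, t⟩ ⟨tax .abort τ, r⟩

/-! ## Occurrences of rules in derivation trees

Since the semantics is deterministic (in particular allocation picks the
least fresh location), a derivation tree is entirely determined by its root
configuration.  `TChild c c'` states that `c'` is the configuration of a
premise of the rule applied at `c`, and `TOcc c₀ c` states that the rule
occurrence at configuration `c` belongs to the derivation tree rooted at
`c₀`. -/
inductive TChild {α : Type} : TConf α → TConf α → Prop where
  | seqL : ∀ (τ : Trace) (E : Env) (H : Heap) (a : α) (s₁ s₂ : Stat α),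
      TChild ⟨τ, E, H, .stat (.seq a s₁ s₂)⟩ ⟨tin .seq τ, E, H, .stat s₁⟩
  | seqR : ∀ (τ : Trace) (E : Env) (H : Heap) (a : α) (s₁ s₂ : Stat α)
      (τ₂ : Trace) (r : Res),
      TRed ⟨tin .seq τ, E, H, .stat s₁⟩ ⟨τ₂, r⟩ →
      TChild ⟨τ, E, H, .stat (.seq a s₁ s₂)⟩ ⟨τ₂, E, H, .seq1 r s₂⟩
  | seq1C : ∀ (τ : Trace) (E : Env) (H : Heap)
      (E' : Env) (H' : Heap) (s : Stat α),
      TChild ⟨τ, E, H, .seq1 (.st E' H') s⟩ ⟨tin .seq1 τ, E', H', .stat s⟩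
  | ifL : ∀ (τ : Trace) (E : Env) (H : Heap) (a : α)
      (e : Expr α) (s₁ s₂ : Stat α),
      TChild ⟨τ, E, H, .stat (.ite a e s₁ s₂)⟩ ⟨tin .if_ τ, E, H, .expr e⟩
  | ifR : ∀ (τ : Trace) (E : Env) (H : Heap) (a : α)
      (e : Expr α) (s₁ s₂ : Stat α) (τ₂ : Trace) (r : Res),
      TRed ⟨tin .if_ τ, E, H, .expr e⟩ ⟨τ₂, r⟩ →
      TChild ⟨τ, E, H, .stat (.ite a e s₁ s₂)⟩ ⟨τ₂, E, H, .if1 r s₁ s₂⟩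
  | ifTrueC : ∀ (τ : Trace) (E : Env) (H : Heap)
      (E' : Env) (H' : Heap) (s₁ s₂ : Stat α),
      TChild ⟨τ, E, H, .if1 (.val E' H' (.bool true)) s₁ s₂⟩
        ⟨tin .ifTrue τ, E', H', .stat s₁⟩
  | ifFalseC : ∀ (τ : Trace) (E : Env) (H : Heap)
      (E' : Env) (H' : Heap) (s₁ s₂ : Stat α),
      TChild ⟨τ, E, H, .if1 (.val E' H' (.bool false)) s₁ s₂⟩
        ⟨tin .ifFalse τ, E', H', .stat s₂⟩
  | whileL : ∀ (τ : Trace) (E : Env) (H : Heap) (a : α)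
      (e : Expr α) (s : Stat α),
      TChild ⟨τ, E, H, .stat (.whileDo a e s)⟩ ⟨tin .while_ τ, E, H, .expr e⟩
  | whileR : ∀ (τ : Trace) (E : Env) (H : Heap) (a : α)
      (e : Expr α) (s : Stat α) (τ₂ : Trace) (r : Res),
      TRed ⟨tin .while_ τ, E, H, .expr e⟩ ⟨τ₂, r⟩ →
      TChild ⟨τ, E, H, .stat (.whileDo a e s)⟩ ⟨τ₂, E, H, .while1 r a e s⟩
  | whileTrue1L : ∀ (τ : Trace) (E : Env) (H : Heap)
      (E' : Env) (H' : Heap) (a : α) (e : Expr α) (s : Stat α),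
      TChild ⟨τ, E, H, .while1 (.val E' H' (.bool true)) a e s⟩
        ⟨tin .whileTrue1 τ, E', H', .stat s⟩
  | whileTrue1R : ∀ (τ : Trace) (E : Env) (H : Heap)
      (E' : Env) (H' : Heap) (a : α) (e : Expr α) (s : Stat α)
      (τ₂ : Trace) (r : Res),
      TRed ⟨tin .whileTrue1 τ, E', H', .stat s⟩ ⟨τ₂, r⟩ →
      TChild ⟨τ, E, H, .while1 (.val E' H' (.bool true)) a e s⟩
        ⟨τ₂, E', H', .while2 r a e s⟩
  | whileTrue2C : ∀ (τ : Trace) (E : Env) (H : Heap)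
      (E' : Env) (H' : Heap) (a : α) (e : Expr α) (s : Stat α),
      TChild ⟨τ, E, H, .while2 (.st E' H') a e s⟩
        ⟨tin .whileTrue2 τ, E', H', .stat (.whileDo a e s)⟩
  | asgL : ∀ (τ : Trace) (E : Env) (H : Heap) (a : α)
      (x : Var) (e : Expr α),
      TChild ⟨τ, E, H, .stat (.asgn a x e)⟩ ⟨tin .asg τ, E, H, .expr e⟩
  | asgR : ∀ (τ : Trace) (E : Env) (H : Heap) (a : α)
      (x : Var) (e : Expr α) (τ₂ : Trace) (r : Res),
      TRed ⟨tin .asg τ, E, H, .expr e⟩ ⟨τ₂, r⟩ →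
      TChild ⟨τ, E, H, .stat (.asgn a x e)⟩ ⟨τ₂, E, H, .asgn1 x r⟩
  | fldAsgL : ∀ (τ : Trace) (E : Env) (H : Heap) (a : α)
      (e₁ : Expr α) (f : FieldName) (e₂ : Expr α),
      TChild ⟨τ, E, H, .stat (.fldAsgn a e₁ f e₂)⟩
        ⟨tin .fldAsg τ, E, H, .expr e₁⟩
  | fldAsgR : ∀ (τ : Trace) (E : Env) (H : Heap) (a : α)
      (e₁ : Expr α) (f : FieldName) (e₂ : Expr α)
      (τ₂ : Trace) (r : Res),
      TRed ⟨tin .fldAsg τ, E, H, .expr e₁⟩ ⟨τ₂, r⟩ →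
      TChild ⟨τ, E, H, .stat (.fldAsgn a e₁ f e₂)⟩
        ⟨τ₂, E, H, .fldAsgn1 r f e₂⟩
  | fldAsg1L : ∀ (τ : Trace) (E : Env) (H : Heap)
      (E' : Env) (H' : Heap) (l : Loc) (f : FieldName) (e : Expr α),
      TChild ⟨τ, E, H, .fldAsgn1 (.val E' H' (.loc l)) f e⟩
        ⟨tin .fldAsg1 τ, E', H', .expr e⟩
  | fldAsg1R : ∀ (τ : Trace) (E : Env) (H : Heap)
      (E' : Env) (H' : Heap) (l : Loc) (f : FieldName) (e : Expr α)
      (τ₂ : Trace) (r : Res),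
      TRed ⟨tin .fldAsg1 τ, E', H', .expr e⟩ ⟨τ₂, r⟩ →
      TChild ⟨τ, E, H, .fldAsgn1 (.val E' H' (.loc l)) f e⟩
        ⟨τ₂, E', H', .fldAsgn2 l f r⟩
  | delL : ∀ (τ : Trace) (E : Env) (H : Heap) (a : α)
      (e : Expr α) (f : FieldName),
      TChild ⟨τ, E, H, .stat (.del a e f)⟩ ⟨tin .del τ, E, H, .expr e⟩
  | delR : ∀ (τ : Trace) (E : Env) (H : Heap) (a : α)
      (e : Expr α) (f : FieldName)
      (τ₂ : Trace) (r : Res),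
      TRed ⟨tin .del τ, E, H, .expr e⟩ ⟨τ₂, r⟩ →
      TChild ⟨τ, E, H, .stat (.del a e f)⟩ ⟨τ₂, E, H, .del1 r f⟩
  | binL : ∀ (τ : Trace) (E : Env) (H : Heap) (a : α)
      (op : Op) (e₁ e₂ : Expr α),
      TChild ⟨τ, E, H, .expr (.bin a op e₁ e₂)⟩ ⟨tin .bin τ, E, H, .expr e₁⟩
  | binR : ∀ (τ : Trace) (E : Env) (H : Heap) (a : α)
      (op : Op) (e₁ e₂ : Expr α) (τ₂ : Trace) (r : Res),
      TRed ⟨tin .bin τ, E, H, .expr e₁⟩ ⟨τ₂, r⟩ →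
      TChild ⟨τ, E, H, .expr (.bin a op e₁ e₂)⟩
        ⟨τ₂, E, H, .bin1 op r e₂⟩
  | bin1L : ∀ (τ : Trace) (E : Env) (H : Heap)
      (E' : Env) (H' : Heap) (op : Op) (v₁ : Val) (e₂ : Expr α),
      TChild ⟨τ, E, H, .bin1 op (.val E' H' v₁) e₂⟩
        ⟨tin .bin1 τ, E', H', .expr e₂⟩
  | bin1R : ∀ (τ : Trace) (E : Env) (H : Heap)
      (E' : Env) (H' : Heap) (op : Op) (v₁ : Val) (e₂ : Expr α)
      (τ₂ : Trace) (r : Res),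
      TRed ⟨tin .bin1 τ, E', H', .expr e₂⟩ ⟨τ₂, r⟩ →
      TChild ⟨τ, E, H, .bin1 op (.val E' H' v₁) e₂⟩
        ⟨τ₂, E', H', .bin2 op v₁ r⟩
  | fldL : ∀ (τ : Trace) (E : Env) (H : Heap) (a : α)
      (e : Expr α) (f : FieldName),
      TChild ⟨τ, E, H, .expr (.fld a e f)⟩ ⟨tin .fld τ, E, H, .expr e⟩
  | fldR : ∀ (τ : Trace) (E : Env) (H : Heap) (a : α)
      (e : Expr α) (f : FieldName)
      (τ₂ : Trace) (r : Res),
      TRed ⟨tin .fld τ, E, H, .expr e⟩ ⟨τ₂, r⟩ →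
      TChild ⟨τ, E, H, .expr (.fld a e f)⟩ ⟨τ₂, E, H, .fld1 r f⟩

/-- `TOcc c₀ c`: the configuration `c` occurs in the derivation tree rooted
at `c₀`. -/
inductive TOcc {α : Type} : TConf α → TConf α → Prop where
  | refl : ∀ c : TConf α, TOcc c c
  | step : ∀ c c' c'' : TConf α, TOcc c c' → TChild c' c'' → TOcc c c''


/-! ### Determinism -/

theorem TRed.det {α : Type} {c : TConf α} {o o' : TOut} (h : TRed c o) (h' : TRed c o') :
    o = o' := by
  induction h generalizing o' with
  | obj τ E H a l hl hmin =>
    cases h' with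
    | obj _ _ _ _ l' hl' hmin' =>
      obtain rfl : l = l' := by
        rcases lt_trichotomy l l' with hlt | heq | hlt
        · exact absurd hl (hmin' _ hlt)
        · exact heq
        · exact absurd hl' (hmin _ hlt)
      rfl
    | abort _ _ _ _ _ ha => simp [abortFn] at ha
  | abort τ E H t r ha =>
    cases h' <;> simp_all [abortFn, Res.errOf]
  | _ =>
    first
      | (cases h' <;> first | rfl | (simp_all [abortFn, Res.errOf]; done))
      -- two premises: identify the outcomes of the first, then those of the second
      | (rename_i ih₁ ih₂
         cases h' <;> first
           | (rename_i k₂ k₁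
              cases ih₁ k₁
              cases ih₂ k₂
              rfl)
           -- `cases` may list the two premises in either order
           | (rename_i k₁ k₂
              cases ih₁ k₁
              cases ih₂ k₂
              rfl)
           | (simp [abortFn, Res.errOf] at *; done))
      | (rename_i ih
         cases h' <;> first
           | (rename_i k
              cases ih k
              rfl)
           | simp [abortFn, Res.errOf] at *)

/-! ### Separation of occurrences by trace length -/

/-- Occurrences decompose at the root, although `TOcc` is generated at the far end. -/
theorem TOcc.eq_or_child {α : Type} {c c' : TConf α} (h : TOcc c c') :
    c' = c ∨ ∃ d, TChild c d ∧ TOcc d c' := by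
  induction h with
  | refl => exact .inl rfl
  | step d e _ hde ih =>
    rcases ih with rfl | ⟨d', h₁, h₂⟩
    · exact .inr ⟨e, hde, .refl e⟩
    · exact .inr ⟨d', h₁, .step _ _ _ h₂ hde⟩

/-- The occurrences in the tree rooted at `c`, whose outcome is `o`, have incoming traces of
pairwise distinct lengths, all lying in the half-open interval from `c.τ.length` to
`o.τ.length`. -/
structure Separated {α : Type} (c : TConf α) (o : TOut) : Prop where
  lower : ∀ c', TOcc c c' → c.τ.length ≤ c'.τ.length
  upper : ∀ c', TOcc c c' → c'.τ.length < o.τ.length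
  inj : ∀ c₁ c₂, TOcc c c₁ → TOcc c c₂ → c₁.τ.length = c₂.τ.length → c₁ = c₂

theorem Separated.root_lt {α : Type} {c : TConf α} {o : TOut} (h : Separated c o) :
    c.τ.length < o.τ.length :=
  h.upper c (.refl c)

/-- Rules with two premises; `c₂` starts with the trace `o₁.τ` the first premise ends with. -/
theorem Separated.of_two {α : Type} {c c₁ c₂ : TConf α} {o o₁ o₂ : TOut}
    (hc : ∀ d, TChild c d → d = c₁ ∨ d = c₂) (h₁ : Separated c₁ o₁) (h₂ : Separated c₂ o₂)
    (l₁ : c.τ.length < c₁.τ.length) (l₂ : o₁.τ.length ≤ c₂.τ.length)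
    (l₃ : o₂.τ.length ≤ o.τ.length) : Separated c o := by
  have key : ∀ d, TOcc c d → d = c ∨ TOcc c₁ d ∨ TOcc c₂ d := by
    intro d hd
    rcases hd.eq_or_child with rfl | ⟨e, he, hed⟩
    · exact .inl rfl
    · rcases hc e he with rfl | rfl
      · exact .inr (.inl hed)
      · exact .inr (.inr hed)
  have r₁ := h₁.root_lt
  have r₂ := h₂.root_lt
  refine ⟨fun d hd => ?_, fun d hd => ?_, fun d e hd he hde => ?_⟩
  · rcases key d hd with rfl | k | k
    · exact le_rfl
    · have := h₁.lower d k
      omega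
    · have := h₂.lower d k
      omega
  · rcases key d hd with rfl | k | k
    · omega
    · have := h₁.upper d k
      omega
    · have := h₂.upper d k
      omega
  · rcases key d hd with rfl | k | k <;> rcases key e he with rfl | m | m
    · rfl
    · have := h₁.lower e m
      omega
    · have := h₂.lower e m
      omega
    · have := h₁.lower d k
      omega
    · exact h₁.inj d e k m hde
    · have := h₁.upper d k
      have := h₂.lower e m
      omega
    · have := h₂.lower d k
      omega
    · have := h₂.lower d k
      have := h₁.upper e m
      omega
    · exact h₂.inj d e k m hde

theorem Separated.of_one {α : Type} {c c₁ : TConf α} {o o₁ : TOut}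
    (hc : ∀ d, TChild c d → d = c₁) (h₁ : Separated c₁ o₁)
    (l₁ : c.τ.length < c₁.τ.length) (l₂ : o₁.τ.length ≤ o.τ.length) : Separated c o := by
  have key : ∀ d, TOcc c d → d = c ∨ TOcc c₁ d := by
    intro d hd
    rcases hd.eq_or_child with rfl | ⟨e, he, hed⟩
    · exact .inl rfl
    · exact .inr (hc e he ▸ hed)
  have r₁ := h₁.root_lt
  refine ⟨fun d hd => ?_, fun d hd => ?_, fun d e hd he hde => ?_⟩
  · rcases key d hd with rfl | k
    · exact le_rfl
    · have := h₁.lower d k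
      omega
  · rcases key d hd with rfl | k
    · omega
    · have := h₁.upper d k
      omega
  · rcases key d hd with rfl | k <;> rcases key e he with rfl | m
    · rfl
    · have := h₁.lower e m
      omega
    · have := h₁.lower d k
      omega
    · exact h₁.inj d e k m hde

theorem Separated.of_none {α : Type} {c : TConf α} {o : TOut}
    (hc : ∀ d, ¬ TChild c d) (l : c.τ.length < o.τ.length) : Separated c o := by
  have key : ∀ d, TOcc c d → d = c := by
    intro d hd
    rcases hd.eq_or_child with h | ⟨e, he, _⟩
    · exact h
    · exact absurd he (hc e)
  refine ⟨fun d hd => ?_, fun d hd => ?_, fun d e hd he _ => ?_⟩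
  · rw [key d hd]
  · rwa [key d hd]
  · rw [key d hd, key e he]

theorem TRed.separated {α : Type} {c : TConf α} {o : TOut} (h : TRed c o) : Separated c o := by
  induction h with
  | abort τ E H t r ha =>
    refine .of_none (fun d hd => ?_) (by simp [tax])
    cases hd <;> simp [abortFn, Res.errOf] at ha
  | _ =>
    first
      | (refine Separated.of_none (fun d hd => ?_) (by simp [tax])
         cases hd
         done)
      | (rename_i ih
         refine Separated.of_one (fun d hd => ?_) ih (by simp [tin]) (by simp [tout])
         cases hd
         rfl)
      | (rename_i k₁ _ ih₁ ih₂
         refine Separated.of_two (fun d hd => ?_) ih₁ ih₂ (by simp [tin]) le_rfl (by simp [tout])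
         cases hd with
         | _ =>
           first
             | exact .inl rfl
             -- the second child starts from an outcome of the first premise, unique by determinism
             | (rename_i k
                cases k₁.det k
                exact .inr rfl))

/-! ## STATEMENT 9

Traces uniquely identify places in a derivation: within a single derivation
tree of the trace-instrumented semantics, any two rule occurrences
`τ₁, S₁, t₁ → τ₁', r₁` and `τ₂, S₂, t₂ → τ₂', r₂` with `τ₁ = τ₂` are the same
occurrence; consequently the environment `E_τ`, heap `H_τ`, and
instrumentation components at a trace `τ` occurring in the derivation are
well defined. -/
theorem traces_uniquely_identify_occurrences {α : Type}
    (c₀ : TConf α) (o₀ : TOut) (hroot : TRed c₀ o₀)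
    -- two rule occurrences in the derivation tree rooted at `c₀` :
    (c₁ c₂ : TConf α) (o₁ o₂ : TOut)
    (hocc₁ : TOcc c₀ c₁) (hred₁ : TRed c₁ o₁)
    (hocc₂ : TOcc c₀ c₂) (hred₂ : TRed c₂ o₂)
    -- with the same trace :
    (hτ : c₁.τ = c₂.τ) :
    -- they are the same occurrence (in particular the state at a trace is
    -- well defined) :
    c₁ = c₂ ∧ o₁ = o₂ := by
  have hc : c₁ = c₂ :=
    hroot.separated.inj c₁ c₂ hocc₁ hocc₂ (congrArg List.length hτ)
  subst hc
  exact ⟨rfl, hred₁.det hred₂⟩
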